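/- Let A ∈ ℝ^{n×n} be nonsingular and 1 ≤ k < d(A). If (c̃, ṽ) ∈ ℝ^k × ℝ^n with ‖ṽ‖ = 1 and d(A, ṽ) ≥ k solves the worst-case GMRES problem max_{‖v‖=1} min_{c ∈ ℝ^k} f(c, v), then (c̃, ṽ) is a stationary point of the function F(c, v) = f(c, v)/(vᵀv): both the partial derivative of F with respect to c and the partial derivative of F with respect to v vanish at (c̃, ṽ). -/

import Mathlib

open Polynomial Matrix

/-- The Euclidean norm of a real vector. -/
noncomputable def euclNorm {ι : Type*} [Fintype ι] (v : ι → ℝ) : ℝ :=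
  Real.sqrt (∑ i, v i ^ 2)

/-- The Euclidean norm of a complex vector. -/
noncomputable def euclNormC {ι : Type*} [Fintype ι] (v : ι → ℂ) : ℝ :=
  Real.sqrt (∑ i, ‖v i‖ ^ 2)

/-- The Euclidean inner product of two real vectors. -/
noncomputable def edot {ι : Type*} [Fintype ι] (u v : ι → ℝ) : ℝ := ∑ i, u i * v i

/-- `p ∈ π_k`: real polynomials of degree at most `k` with value `1` at the origin. -/
def IsPik (k : ℕ) (p : Polynomial ℝ) : Prop := p.natDegree ≤ k ∧ p.eval 0 = 1

/-- `p ∈ π_{k,ℂ}`: complex polynomials of degree at most `k` with value `1` at the origin. -/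
def IsPikC (k : ℕ) (p : Polynomial ℂ) : Prop := p.natDegree ≤ k ∧ p.eval 0 = 1

/-- The `k`-th GMRES residual norm `min_{p ∈ π_k} ‖p(A)v‖`. -/
noncomputable def gmresVal {ι : Type*} [Fintype ι] [DecidableEq ι]
    (A : Matrix ι ι ℝ) (k : ℕ) (v : ι → ℝ) : ℝ :=
  sInf {s : ℝ | ∃ p : Polynomial ℝ, IsPik k p ∧ s = euclNorm ((Polynomial.aeval A p).mulVec v)}

/-- The `k`-th worst-case GMRES approximation `Ψ_k(A) = max_{‖v‖=1} min_{p ∈ π_k} ‖p(A)v‖`. -/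
noncomputable def Psi {ι : Type*} [Fintype ι] [DecidableEq ι]
    (A : Matrix ι ι ℝ) (k : ℕ) : ℝ :=
  sSup {r : ℝ | ∃ v : ι → ℝ, euclNorm v = 1 ∧ r = gmresVal A k v}

/-- `d(A)`: the degree of the minimal polynomial of `A`. -/
noncomputable def dA {ι : Type*} [Fintype ι] [DecidableEq ι] (A : Matrix ι ι ℝ) : ℕ :=
  (minpoly ℝ A).natDegree

/-- `d(A,b)`: the smallest degree of a nonzero polynomial `q` with `q(A)b = 0`. -/
noncomputable def dAb {ι : Type*} [Fintype ι] [DecidableEq ι]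
    (A : Matrix ι ι ℝ) (b : ι → ℝ) : ℕ :=
  sInf {d : ℕ | ∃ q : Polynomial ℝ, q ≠ 0 ∧ q.natDegree = d ∧ (Polynomial.aeval A q).mulVec b = 0}

/-- `r = GMRES(A,b,k)`: `r = p(A)b` for some `p ∈ π_k` minimizing `‖p(A)b‖` over `π_k`. -/
def IsGmresRes {ι : Type*} [Fintype ι] [DecidableEq ι]
    (A : Matrix ι ι ℝ) (k : ℕ) (b r : ι → ℝ) : Prop :=
  ∃ p : Polynomial ℝ, IsPik k p ∧ r = (Polynomial.aeval A p).mulVec b ∧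
    ∀ q : Polynomial ℝ, IsPik k q → euclNorm r ≤ euclNorm ((Polynomial.aeval A q).mulVec b)

/-- `p` is the `k`-th GMRES polynomial of `A` and `b`: `p ∈ π_k` minimizes `‖p(A)b‖`. -/
def IsGmresPoly {ι : Type*} [Fintype ι] [DecidableEq ι]
    (A : Matrix ι ι ℝ) (k : ℕ) (b : ι → ℝ) (p : Polynomial ℝ) : Prop :=
  IsPik k p ∧ ∀ q : Polynomial ℝ, IsPik k q →
    euclNorm ((Polynomial.aeval A p).mulVec b) ≤ euclNorm ((Polynomial.aeval A q).mulVec b)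

/-- The Krylov subspace `K_k(A,b) = span{b, Ab, …, A^{k-1}b}`. -/
noncomputable def krylov {ι : Type*} [Fintype ι] [DecidableEq ι]
    (A : Matrix ι ι ℝ) (k : ℕ) (b : ι → ℝ) : Submodule ℝ (ι → ℝ) :=
  Submodule.span ℝ (Set.range fun i : Fin k => (A ^ (i : ℕ)).mulVec b)

/-- `b` satisfies the cross equality for `A` and step `k`. -/
def CrossEq {ι : Type*} [Fintype ι] [DecidableEq ι]
    (A : Matrix ι ι ℝ) (k : ℕ) (b : ι → ℝ) : Prop :=
  ∀ r s : ι → ℝ, IsGmresRes A k b r → IsGmresRes Aᵀ k ((euclNorm r)⁻¹ • r) s →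
    b = (euclNorm s)⁻¹ • s

/-- The Krylov matrix `K(v) = [Av, A²v, …, A^k v]`. -/
noncomputable def Kmat {n : ℕ} (A : Matrix (Fin n) (Fin n) ℝ) (k : ℕ) (v : Fin n → ℝ) :
    Matrix (Fin n) (Fin k) ℝ :=
  Matrix.of fun i j => (A ^ ((j : ℕ) + 1)).mulVec v i

/-- `γ(v) = (K(v)ᵀK(v))⁻¹ K(v)ᵀ v`. -/
noncomputable def gammaVec {n : ℕ} (A : Matrix (Fin n) (Fin n) ℝ) (k : ℕ) (v : Fin n → ℝ) :
    Fin k → ℝ :=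
  ((Kmat A k v)ᵀ * Kmat A k v)⁻¹ *ᵥ ((Kmat A k v)ᵀ *ᵥ v)

/-- `g(v) = min_{c ∈ ℝ^k} ‖v - K(v)c‖²`. -/
noncomputable def gFun {n : ℕ} (A : Matrix (Fin n) (Fin n) ℝ) (k : ℕ) (v : Fin n → ℝ) : ℝ :=
  sInf {s : ℝ | ∃ c : Fin k → ℝ, s = euclNorm (v - Kmat A k v *ᵥ c) ^ 2}

/-- `p(z; c) = 1 - ∑_{j=1}^k c_j z^j`. -/
noncomputable def pPoly {k : ℕ} (c : Fin k → ℝ) : Polynomial ℝ :=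
  1 - ∑ j : Fin k, Polynomial.C (c j) * Polynomial.X ^ ((j : ℕ) + 1)

/-- `f(c,v) = ‖p(A;c)v‖²`. -/
noncomputable def fFun {n k : ℕ} (A : Matrix (Fin n) (Fin n) ℝ) (c : Fin k → ℝ)
    (v : Fin n → ℝ) : ℝ :=
  euclNorm ((Polynomial.aeval A (pPoly c)).mulVec v) ^ 2

/-- `F(c,v) = f(c,v)/(vᵀv)`. -/
noncomputable def FFun {n k : ℕ} (A : Matrix (Fin n) (Fin n) ℝ) (c : Fin k → ℝ)
    (v : Fin n → ℝ) : ℝ :=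
  fFun A c v / edot v v

/-- The Toh matrix `A(ω, ε)`. -/
noncomputable def tohMatrix (ω ε : ℝ) : Matrix (Fin 4) (Fin 4) ℝ :=
  !![1, ε, 0, 0; 0, -1, ω / ε, 0; 0, 0, 1, ε; 0, 0, 0, -1]

/-- `p` is a `k`-th worst-case GMRES polynomial of `A`. -/
def IsWCPoly {ι : Type*} [Fintype ι] [DecidableEq ι]
    (A : Matrix ι ι ℝ) (k : ℕ) (p : Polynomial ℝ) : Prop :=
  IsPik k p ∧ ∃ b : ι → ℝ, euclNorm b = 1 ∧
    (∀ q : Polynomial ℝ, IsPik k q →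
      euclNorm ((Polynomial.aeval A p).mulVec b) ≤ euclNorm ((Polynomial.aeval A q).mulVec b)) ∧
    euclNorm ((Polynomial.aeval A p).mulVec b) = Psi A k

/-- The spectral (Euclidean operator) norm of a real matrix. -/
noncomputable def specNorm {ι : Type*} [Fintype ι] (M : Matrix ι ι ℝ) : ℝ :=
  sSup {r : ℝ | ∃ v : ι → ℝ, euclNorm v = 1 ∧ r = euclNorm (M *ᵥ v)}

/-- The `k`-th ideal GMRES approximation `φ_k(A) = min_{p ∈ π_k} ‖p(A)‖`. -/
noncomputable def phiIdeal {ι : Type*} [Fintype ι] [DecidableEq ι]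
    (A : Matrix ι ι ℝ) (k : ℕ) : ℝ :=
  sInf {r : ℝ | ∃ p : Polynomial ℝ, IsPik k p ∧ r = specNorm (Polynomial.aeval A p)}

/-- Complexification of a real matrix. -/
noncomputable def matC {ι : Type*} (A : Matrix ι ι ℝ) : Matrix ι ι ℂ :=
  A.map fun x => (x : ℂ)

/-- Complexification of a real vector. -/
noncomputable def vecC {ι : Type*} (b : ι → ℝ) : ι → ℂ := fun i => (b i : ℂ)

/-- `Ψ_{k,ℂ,ℝ}(A)`: complex polynomials, real initial vectors. -/
noncomputable def PsiCR {ι : Type*} [Fintype ι] [DecidableEq ι]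
    (A : Matrix ι ι ℝ) (k : ℕ) : ℝ :=
  sSup {r : ℝ | ∃ b : ι → ℝ, euclNorm b = 1 ∧
    r = sInf {s : ℝ | ∃ p : Polynomial ℂ, IsPikC k p ∧
      s = euclNormC ((Polynomial.aeval (matC A) p).mulVec (vecC b))}}

/-- `Ψ_{k,ℂ,ℂ}(A)`: complex polynomials, complex initial vectors. -/
noncomputable def PsiCC {ι : Type*} [Fintype ι] [DecidableEq ι]
    (A : Matrix ι ι ℝ) (k : ℕ) : ℝ :=
  sSup {r : ℝ | ∃ b : ι → ℂ, euclNormC b = 1 ∧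
    r = sInf {s : ℝ | ∃ p : Polynomial ℂ, IsPikC k p ∧
      s = euclNormC ((Polynomial.aeval (matC A) p).mulVec b)}}

/-- `Ψ_{k,ℝ,ℂ}(A)`: real polynomials, complex initial vectors. -/
noncomputable def PsiRC {ι : Type*} [Fintype ι] [DecidableEq ι]
    (A : Matrix ι ι ℝ) (k : ℕ) : ℝ :=
  sSup {r : ℝ | ∃ b : ι → ℂ, euclNormC b = 1 ∧
    r = sInf {s : ℝ | ∃ p : Polynomial ℝ, IsPik k p ∧
      s = euclNormC ((Polynomial.aeval (matC A) (p.map (algebraMap ℝ ℂ))).mulVec b)}}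

/-- `φ_{k,ℝ,ℝ}(A)`. -/
noncomputable def phiRR {ι : Type*} [Fintype ι] [DecidableEq ι]
    (A : Matrix ι ι ℝ) (k : ℕ) : ℝ :=
  sInf {r : ℝ | ∃ p : Polynomial ℝ, IsPik k p ∧
    r = sSup {s : ℝ | ∃ b : ι → ℝ, euclNorm b = 1 ∧
      s = euclNorm ((Polynomial.aeval A p).mulVec b)}}

/-- `φ_{k,ℂ,ℝ}(A)`. -/
noncomputable def phiCR {ι : Type*} [Fintype ι] [DecidableEq ι]
    (A : Matrix ι ι ℝ) (k : ℕ) : ℝ :=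
  sInf {r : ℝ | ∃ p : Polynomial ℂ, IsPikC k p ∧
    r = sSup {s : ℝ | ∃ b : ι → ℝ, euclNorm b = 1 ∧
      s = euclNormC ((Polynomial.aeval (matC A) p).mulVec (vecC b))}}

/-- `φ_{k,ℝ,ℂ}(A)`. -/
noncomputable def phiRC {ι : Type*} [Fintype ι] [DecidableEq ι]
    (A : Matrix ι ι ℝ) (k : ℕ) : ℝ :=
  sInf {r : ℝ | ∃ p : Polynomial ℝ, IsPik k p ∧
    r = sSup {s : ℝ | ∃ b : ι → ℂ, euclNormC b = 1 ∧
      s = euclNormC ((Polynomial.aeval (matC A) (p.map (algebraMap ℝ ℂ))).mulVec b)}}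

/-- `φ_{k,ℂ,ℂ}(A)`. -/
noncomputable def phiCC {ι : Type*} [Fintype ι] [DecidableEq ι]
    (A : Matrix ι ι ℝ) (k : ℕ) : ℝ :=
  sInf {r : ℝ | ∃ p : Polynomial ℂ, IsPikC k p ∧
    r = sSup {s : ℝ | ∃ b : ι → ℂ, euclNormC b = 1 ∧
      s = euclNormC ((Polynomial.aeval (matC A) p).mulVec b)}}

/-!
At a solution `(c̃, ṽ)` of the max-min problem, let `c(v)` satisfy `F(c(v), v) ≤ F(c̃, ṽ)`. Since
also `F(c̃, ṽ) ≤ F(c(v), ṽ)`, the function `v ↦ F(c(v), v) - F(c(v), ṽ)` has a maximum at `ṽ`. If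
`c(v) → c̃`, then strict differentiability of `F` shows that the derivative of this function at `ṽ`
is `∂F/∂v (c̃, ṽ)`, which therefore vanishes.

With `K(v) = [Av, …, A^k v]` we have `p(A; c)v = v - K(v)c`. If `K(ṽ)` has full column rank, then
`c̃` is the only minimizer of `F(·, ṽ)`, and convexity in `c` forces `c(v) → c̃`. Otherwise a
nonzero polynomial of degree at most `k` annihilates `ṽ`; as `A` is invertible, powers of `z` can
be cancelled from it, so that `f(c, ṽ) = 0` for some `c`. Then `F` attains its least value `0` at
`(c̃, ṽ)`.
-/

open Filter Topology Set Function

section MaxMin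

theorem hasFDerivAt_increment_right_of_tendsto {𝕜 C V G : Type*} [NontriviallyNormedField 𝕜]
    [NormedAddCommGroup C] [NormedSpace 𝕜 C] [NormedAddCommGroup V] [NormedSpace 𝕜 V]
    [NormedAddCommGroup G] [NormedSpace 𝕜 G] {F : C → V → G} {F' : C × V →L[𝕜] G}
    {c₀ : C} {v₀ : V} {c : V → C}
    (hF : HasStrictFDerivAt (uncurry F) F' (c₀, v₀)) (hc : Tendsto c (𝓝 v₀) (𝓝 c₀)) :
    HasFDerivAt (fun v => F (c v) v - F (c v) v₀) (F' ∘L .inr 𝕜 C V) v₀ := by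
  have htendsto : Tendsto (fun v => ((c v, v), (c v, v₀))) (𝓝 v₀) (𝓝 ((c₀, v₀), (c₀, v₀))) :=
    (hc.prodMk_nhds tendsto_id).prodMk_nhds (hc.prodMk_nhds tendsto_const_nhds)
  have hdiff (v : V) : (c v, v) - (c v, v₀) = ((0, v - v₀) : C × V) := by simp
  refine .of_isLittleO (((hF.isLittleO.comp_tendsto htendsto).congr_left ?_).trans_le ?_)
  · intro v
    simp only [Function.comp_apply, uncurry_apply_pair, hdiff, sub_self, sub_zero,
      ContinuousLinearMap.comp_apply, ContinuousLinearMap.inr_apply]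
  · simp [hdiff]

variable {C V : Type*} [NormedAddCommGroup C] [NormedSpace ℝ C]

theorem eventually_forall_dist_lt_of_quasiconvexOn [ProperSpace C] [TopologicalSpace V]
    {F : C → V → ℝ} {c₀ : C} {v₀ : V} (hconv : ∀ v, QuasiconvexOn ℝ univ fun c => F c v)
    (hcont : ∀ c, ContinuousAt (uncurry F) (c, v₀)) (hmin : ∀ c ≠ c₀, F c₀ v₀ < F c v₀)
    {ε : ℝ} (hε : 0 < ε) :
    ∀ᶠ v in 𝓝 v₀, ∀ c, F c v ≤ F c₀ v₀ → dist c c₀ < ε := by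
  have hsphere : ∀ᶠ v in 𝓝 v₀, ∀ c ∈ Metric.sphere c₀ ε, max (F c₀ v₀) (F c₀ v) < F c v := by
    refine (isCompact_sphere c₀ ε).eventually_forall_of_forall_eventually fun c hc => ?_
    have hlt := hmin c (Metric.ne_of_mem_sphere hc hε.ne')
    have hF : Tendsto (fun z : V × C => F z.2 z.1) (𝓝 (v₀, c)) (𝓝 (F c v₀)) :=
      (hcont c).tendsto.comp (continuous_swap.tendsto (v₀, c))
    have hF₀ : Tendsto (fun z : V × C => F c₀ z.1) (𝓝 (v₀, c)) (𝓝 (F c₀ v₀)) :=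
      (hcont c₀).tendsto.comp ((continuous_const.prodMk continuous_fst).tendsto (v₀, c))
    filter_upwards [hF.eventually_const_lt hlt, hF₀.eventually_lt hF hlt] with z h h₀
    exact max_lt h h₀
  filter_upwards [hsphere] with v hv c hc
  by_contra! hdist
  have hpos : 0 < dist c c₀ := hε.trans_le hdist
  let d := AffineMap.lineMap c₀ c (ε / dist c c₀)
  have hd_sphere : d ∈ Metric.sphere c₀ ε := by
    rw [Metric.mem_sphere, dist_lineMap_left, dist_comm c₀ c,
      Real.norm_of_nonneg (by positivity), div_mul_cancel₀ _ hpos.ne']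
  have hd_le : d ∈ {c ∈ univ | F c v ≤ max (F c₀ v₀) (F c₀ v)} :=
    (hconv v _).lineMap_mem ⟨mem_univ _, le_max_right _ _⟩ ⟨mem_univ _, hc.trans (le_max_left _ _)⟩
      ⟨by positivity, div_le_one_of_le₀ hdist hpos.le⟩
  exact (hv d hd_sphere).not_ge hd_le.2

variable [NormedAddCommGroup V] [NormedSpace ℝ V] {F : C → V → ℝ} {c₀ : C} {v₀ : V}

theorem fderiv_right_eq_zero_of_tendsto {F' : C × V →L[ℝ] ℝ} {c : V → C}
    (hF : HasStrictFDerivAt (uncurry F) F' (c₀, v₀)) (hc : Tendsto c (𝓝 v₀) (𝓝 c₀))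
    (hmin : ∀ c, F c₀ v₀ ≤ F c v₀) (hmax : ∀ᶠ v in 𝓝 v₀, F (c v) v ≤ F c₀ v₀) :
    fderiv ℝ (F c₀) v₀ = 0 := by
  have hlocmax : IsLocalMax (fun v => F (c v) v - F (c v) v₀) v₀ := by
    filter_upwards [hmax] with v hv
    rw [sub_self, sub_nonpos]
    exact hv.trans (hmin (c v))
  have hpartial : HasFDerivAt (F c₀) (F' ∘L .inr ℝ C V) v₀ :=
    hF.hasFDerivAt.comp v₀ (hasFDerivAt_prodMk_right c₀ v₀)
  rw [hpartial.fderiv,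
    hlocmax.hasFDerivAt_eq_zero (hasFDerivAt_increment_right_of_tendsto hF hc)]

theorem fderiv_right_eq_zero_of_max_min [ProperSpace C] {F' : C × V →L[ℝ] ℝ}
    (hconv : ∀ v, QuasiconvexOn ℝ univ fun c => F c v)
    (hcont : ∀ c, ContinuousAt (uncurry F) (c, v₀))
    (hF : HasStrictFDerivAt (uncurry F) F' (c₀, v₀)) (hmin : ∀ c ≠ c₀, F c₀ v₀ < F c v₀)
    (hmax : ∀ᶠ v in 𝓝 v₀, ∃ c, F c v ≤ F c₀ v₀) :
    fderiv ℝ (F c₀) v₀ = 0 := by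
  obtain ⟨c, hc⟩ := hmax.choice
  have hc_tendsto : Tendsto c (𝓝 v₀) (𝓝 c₀) := by
    refine Metric.tendsto_nhds.2 fun ε hε => ?_
    filter_upwards [hc, eventually_forall_dist_lt_of_quasiconvexOn hconv hcont hmin hε]
      with v hv hdist
    exact hdist _ hv
  have hmin_le (c : C) : F c₀ v₀ ≤ F c v₀ := by
    obtain rfl | hne := eq_or_ne c c₀
    exacts [le_rfl, (hmin c hne).le]
  exact fderiv_right_eq_zero_of_tendsto hF hc_tendsto hmin_le hc

end MaxMin

section LeastSquares

variable {C E : Type*} [AddCommGroup C] [Module ℝ C] [NormedAddCommGroup E] [NormedSpace ℝ E]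

theorem convexOn_norm_sub_map (T : C →ₗ[ℝ] E) (y : E) :
    ConvexOn ℝ univ fun c => ‖y - T c‖ :=
  convexOn_univ_norm.comp_affineMap (AffineMap.const ℝ C y - T.toAffineMap)

theorem norm_sub_map_lt_of_forall_le_of_ne [StrictConvexSpace ℝ E] {T : C →ₗ[ℝ] E}
    (hT : Injective T) {y : E} {c₀ c : C} (hmin : ∀ d, ‖y - T c₀‖ ≤ ‖y - T d‖) (hne : c ≠ c₀) :
    ‖y - T c₀‖ < ‖y - T c‖ := by
  refine (hmin c).lt_of_ne fun heq => ?_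
  have hres_ne : y - T c₀ ≠ y - T c := fun h => hne (hT (sub_right_injective h).symm)
  have hmid : y - T ((1 / 2 : ℝ) • (c₀ + c)) = (1 / 2 : ℝ) • (y - T c₀ + (y - T c)) := by
    rw [map_smul, map_add]
    module
  have hlt := (norm_midpoint_lt_iff heq).2 hres_ne
  rw [← hmid] at hlt
  exact (hmin _).not_gt hlt

end LeastSquares

section EuclideanNorm

variable {ι : Type*} [Fintype ι]

theorem euclNorm_eq_norm (v : ι → ℝ) : euclNorm v = ‖WithLp.toLp 2 v‖ := by
  simp [euclNorm, EuclideanSpace.norm_eq]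

theorem euclNorm_smul (r : ℝ) (v : ι → ℝ) : euclNorm (r • v) = |r| * euclNorm v := by
  rw [euclNorm_eq_norm, euclNorm_eq_norm, WithLp.toLp_smul, norm_smul, Real.norm_eq_abs]

theorem euclNorm_eq_zero {v : ι → ℝ} : euclNorm v = 0 ↔ v = 0 := by
  rw [euclNorm_eq_norm, norm_eq_zero, WithLp.toLp_eq_zero]

theorem edot_self (v : ι → ℝ) : edot v v = euclNorm v ^ 2 := by
  rw [euclNorm, Real.sq_sqrt (by positivity)]
  simp only [edot, sq]

end EuclideanNorm

section ResidualPolynomials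

variable {k : ℕ}

theorem coeff_pPoly_succ (c : Fin k → ℝ) (j : Fin k) : (pPoly c).coeff (j + 1) = -c j := by
  simp [pPoly, coeff_one, coeff_X_pow, Fin.val_inj]

theorem pPoly_injective : Injective (pPoly (k := k)) := fun c d h => by
  ext j
  simpa [coeff_pPoly_succ] using congrArg (coeff · (j + 1)) h

theorem natDegree_pPoly_le (c : Fin k → ℝ) : (pPoly c).natDegree ≤ k := by
  refine (natDegree_sub_le _ _).trans (max_le (by simp) ?_)
  refine natDegree_sum_le_of_forall_le _ _ fun j _ => ?_
  exact (natDegree_C_mul_X_pow_le _ _).trans j.2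

theorem IsPik.exists_pPoly_eq {p : ℝ[X]} (hp : IsPik k p) : ∃ c : Fin k → ℝ, pPoly c = p := by
  obtain ⟨hdeg, heval⟩ := hp
  refine ⟨fun j => -p.coeff (j + 1), ?_⟩
  conv_rhs => rw [p.as_sum_range_C_mul_X_pow' (Nat.lt_succ_of_le hdeg), Finset.sum_range_succ',
    coeff_zero_eq_eval_zero, heval, ← Fin.sum_univ_eq_sum_range
      (fun i => C (p.coeff (i + 1)) * X ^ (i + 1))]
  simp [pPoly, add_comm]

theorem exists_isPik_aeval_mulVec_eq_zero {ι : Type*} [Fintype ι] [DecidableEq ι]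
    {A : Matrix ι ι ℝ} (hA : IsUnit A) {v : ι → ℝ} {q : ℝ[X]} (hq : q ≠ 0) (hdeg : q.natDegree ≤ k)
    (hqv : aeval A q *ᵥ v = 0) : ∃ p, IsPik k p ∧ aeval A p *ᵥ v = 0 := by
  obtain ⟨r, hqr, hXr⟩ := q.exists_eq_pow_rootMultiplicity_mul_and_not_dvd hq 0
  rw [C_0, sub_zero] at hqr hXr
  have hr₀ : r.eval 0 ≠ 0 := by rwa [X_dvd_iff, coeff_zero_eq_eval_zero] at hXr
  have hr_deg : r.natDegree ≤ k :=
    (natDegree_le_of_dvd (Dvd.intro_left _ hqr.symm) hq).trans hdeg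
  have hrv : aeval A r *ᵥ v = 0 := by
    refine mulVec_injective_iff_isUnit.2 (hA.pow (q.rootMultiplicity 0)) ?_
    rw [mulVec_zero]
    rwa [hqr, map_mul, map_pow, aeval_X, ← mulVec_mulVec] at hqv
  refine ⟨C (r.eval 0)⁻¹ * r, ⟨(natDegree_C_mul_le _ _).trans hr_deg, by simp [hr₀]⟩, ?_⟩
  rw [map_mul, ← mulVec_mulVec, hrv, mulVec_zero]

end ResidualPolynomials

section WorstCaseGMRES

variable {n k : ℕ} (A : Matrix (Fin n) (Fin n) ℝ)

theorem aeval_pPoly_mulVec (c : Fin k → ℝ) (v : Fin n → ℝ) :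
    aeval A (pPoly c) *ᵥ v = v - Kmat A k v *ᵥ c := by
  ext i
  have hK : (Kmat A k v *ᵥ c) i = ∑ j : Fin k, (A ^ ((j : ℕ) + 1) *ᵥ v) i * c j := rfl
  simp [pPoly, hK, sub_mulVec, sum_mulVec, ← Algebra.smul_def, smul_mulVec, mul_comm (c _)]

/-- The Krylov matrix `K(v)` as a linear map into Euclidean space; the codomain carries the norm
for which `f(c, v) = ‖v - K(v)c‖²`. -/
noncomputable def krylovMap (k : ℕ) (v : Fin n → ℝ) :
    (Fin k → ℝ) →ₗ[ℝ] EuclideanSpace ℝ (Fin n) :=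
  (WithLp.linearEquiv 2 ℝ (Fin n → ℝ)).symm.toLinearMap ∘ₗ (Kmat A k v).mulVecLin

theorem fFun_eq_norm_sub_krylovMap_sq (c : Fin k → ℝ) (v : Fin n → ℝ) :
    fFun A c v = ‖WithLp.toLp 2 v - krylovMap A k v c‖ ^ 2 := by
  rw [fFun, aeval_pPoly_mulVec, euclNorm_eq_norm, WithLp.toLp_sub]
  rfl

theorem fFun_nonneg (c : Fin k → ℝ) (v : Fin n → ℝ) : 0 ≤ fFun A c v :=
  sq_nonneg _

theorem convexOn_fFun (v : Fin n → ℝ) : ConvexOn ℝ univ fun c : Fin k → ℝ => fFun A c v := by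
  simp only [fFun_eq_norm_sub_krylovMap_sq]
  exact (convexOn_norm_sub_map _ _).pow (fun _ _ => norm_nonneg _) 2

variable {A} in
theorem fFun_lt_of_forall_le_of_ne {v : Fin n → ℝ} (hK : Injective (krylovMap A k v))
    {c₀ c : Fin k → ℝ} (hmin : ∀ d : Fin k → ℝ, fFun A c₀ v ≤ fFun A d v) (hne : c ≠ c₀) :
    fFun A c₀ v < fFun A c v := by
  simp only [fFun_eq_norm_sub_krylovMap_sq] at hmin ⊢
  have hmin_norm (d : Fin k → ℝ) := (sq_le_sq₀ (norm_nonneg _) (norm_nonneg _)).1 (hmin d)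
  exact pow_lt_pow_left₀ (norm_sub_map_lt_of_forall_le_of_ne hK hmin_norm hne) (norm_nonneg _)
    two_ne_zero

theorem FFun_nonneg (c : Fin k → ℝ) (v : Fin n → ℝ) : 0 ≤ FFun A c v := by
  rw [FFun, edot_self]
  exact div_nonneg (fFun_nonneg A c v) (sq_nonneg _)

theorem FFun_eq_fFun {v : Fin n → ℝ} (hv : euclNorm v = 1) (c : Fin k → ℝ) :
    FFun A c v = fFun A c v := by
  rw [FFun, edot_self, hv, one_pow, div_one]

theorem FFun_smul {r : ℝ} (hr : r ≠ 0) (c : Fin k → ℝ) (v : Fin n → ℝ) :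
    FFun A c (r • v) = FFun A c v := by
  rw [FFun, FFun, fFun, fFun, edot_self, edot_self, mulVec_smul, euclNorm_smul, euclNorm_smul,
    mul_pow, mul_pow, mul_div_mul_left _ _ (by positivity)]

theorem quasiconvexOn_FFun (v : Fin n → ℝ) :
    QuasiconvexOn ℝ univ fun c : Fin k → ℝ => FFun A c v := by
  have hinv : 0 ≤ (edot v v)⁻¹ := inv_nonneg.2 (edot_self v ▸ sq_nonneg _)
  simpa only [FFun, div_eq_inv_mul, smul_eq_mul] using ((convexOn_fFun A v).smul hinv).quasiconvexOn

theorem contDiffAt_FFun {m : WithTop ℕ∞} {v : Fin n → ℝ} (hv : v ≠ 0) (c : Fin k → ℝ) :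
    ContDiffAt ℝ m (uncurry (FFun A)) (c, v) := by
  have hdenom : edot v v ≠ 0 := by
    rw [edot_self]
    exact pow_ne_zero 2 (euclNorm_eq_zero.not.2 hv)
  have hf : ContDiff ℝ m fun z : (Fin k → ℝ) × (Fin n → ℝ) => fFun A z.1 z.2 := by
    simp only [fFun, ← edot_self, aeval_pPoly_mulVec, edot, Kmat, Pi.sub_apply, mulVec, dotProduct,
      of_apply]
    fun_prop
  have hvv : ContDiff ℝ m fun z : (Fin k → ℝ) × (Fin n → ℝ) => edot z.2 z.2 := by
    simp only [edot]
    fun_prop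
  exact hf.contDiffAt.div hvv.contDiffAt hdenom

variable {A}

theorem exists_fFun_eq_zero (hA : IsUnit A) {v : Fin n → ℝ}
    (hK : ¬ Injective (krylovMap A k v)) : ∃ c : Fin k → ℝ, fFun A c v = 0 := by
  obtain ⟨c, d, hcd, hne⟩ : ∃ c d, krylovMap A k v c = krylovMap A k v d ∧ c ≠ d := by
    simpa [Injective] using hK
  have hq_deg : (pPoly c - pPoly d).natDegree ≤ k :=
    (natDegree_sub_le_of_le (natDegree_pPoly_le c) (natDegree_pPoly_le d)).trans_eq (max_self k)
  have hqv : aeval A (pPoly c - pPoly d) *ᵥ v = 0 := by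
    have hKcd : Kmat A k v *ᵥ c = Kmat A k v *ᵥ d := WithLp.toLp_injective 2 hcd
    rw [map_sub, sub_mulVec, aeval_pPoly_mulVec, aeval_pPoly_mulVec, hKcd, sub_self]
  obtain ⟨p, hp, hpv⟩ := exists_isPik_aeval_mulVec_eq_zero hA
    (sub_ne_zero.2 (pPoly_injective.ne hne)) hq_deg hqv
  obtain ⟨e, rfl⟩ := hp.exists_pPoly_eq
  exact ⟨e, by rw [fFun, hpv, euclNorm_eq_zero.2 rfl, zero_pow two_ne_zero]⟩

theorem exists_FFun_le_of_forall_unit {m : ℝ}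
    (h : ∀ v : Fin n → ℝ, euclNorm v = 1 → ∃ c : Fin k → ℝ, fFun A c v ≤ m)
    {v : Fin n → ℝ} (hv : v ≠ 0) : ∃ c : Fin k → ℝ, FFun A c v ≤ m := by
  have hnorm : 0 < euclNorm v := (Real.sqrt_nonneg _).lt_of_ne' (euclNorm_eq_zero.not.2 hv)
  have hunit : euclNorm ((euclNorm v)⁻¹ • v) = 1 := by
    rw [euclNorm_smul, abs_of_pos (inv_pos.2 hnorm), inv_mul_cancel₀ hnorm.ne']
  obtain ⟨c, hc⟩ := h _ hunit
  exact ⟨c, by rwa [← FFun_eq_fFun A hunit, FFun_smul A (inv_ne_zero hnorm.ne')] at hc⟩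

theorem worst_case_stationary_point_general (hA : IsUnit A) {ct : Fin k → ℝ} {vt : Fin n → ℝ}
    (hvt : euclNorm vt = 1) (hmin : ∀ c : Fin k → ℝ, fFun A ct vt ≤ fFun A c vt)
    (hmax : ∀ v : Fin n → ℝ, euclNorm v = 1 → ∃ c : Fin k → ℝ, fFun A c v ≤ fFun A ct vt) :
    fderiv ℝ (fun c : Fin k → ℝ => FFun A c vt) ct = 0 ∧
    fderiv ℝ (fun v : Fin n → ℝ => FFun A ct v) vt = 0 := by
  have hF (c : Fin k → ℝ) : FFun A c vt = fFun A c vt := FFun_eq_fFun A hvt c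
  have hvt₀ : vt ≠ 0 := fun h => by simp [euclNorm_eq_zero.2 h] at hvt
  refine ⟨IsLocalMin.fderiv_eq_zero (.of_forall fun c => by simpa only [hF] using hmin c), ?_⟩
  by_cases hK : Injective (krylovMap A k vt)
  · refine fderiv_right_eq_zero_of_max_min (quasiconvexOn_FFun A)
      (fun c => (contDiffAt_FFun (m := 1) A hvt₀ c).continuousAt)
      ((contDiffAt_FFun (m := 1) A hvt₀ ct).hasStrictFDerivAt one_ne_zero) ?_ ?_
    · intro c hc
      simpa only [hF] using fFun_lt_of_forall_le_of_ne hK hmin hc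
    · filter_upwards [eventually_ne_nhds hvt₀] with v hv
      simpa only [hF] using exists_FFun_le_of_forall_unit hmax hv
  · obtain ⟨c, hc⟩ := exists_fFun_eq_zero hA hK
    have hzero : FFun A ct vt ≤ 0 := (hF ct).trans_le ((hmin c).trans_eq hc)
    exact IsLocalMin.fderiv_eq_zero (.of_forall fun v => hzero.trans (FFun_nonneg A ct v))

end WorstCaseGMRES

/-- If `(c̃, ṽ)` with `‖ṽ‖ = 1` and `d(A,ṽ) ≥ k` solves the worst-case GMRES
problem `max_{‖v‖=1} min_c f(c,v)`, then `(c̃, ṽ)` is a stationary point of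
`F(c,v) = f(c,v)/(vᵀv)`: both partial derivatives of `F` vanish at `(c̃, ṽ)`. -/
theorem worst_case_stationary_point {n : ℕ} (A : Matrix (Fin n) (Fin n) ℝ)
    (hA : IsUnit A) (k : ℕ) (hk1 : 1 ≤ k) (hk2 : k < dA A)
    (ct : Fin k → ℝ) (vt : Fin n → ℝ) (hvt : euclNorm vt = 1) (hd : k ≤ dAb A vt)
    (hmin : ∀ c : Fin k → ℝ, fFun A ct vt ≤ fFun A c vt)
    (hmax : ∀ v : Fin n → ℝ, euclNorm v = 1 → ∃ c : Fin k → ℝ, fFun A c v ≤ fFun A ct vt) :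
    fderiv ℝ (fun c : Fin k → ℝ => FFun A c vt) ct = 0 ∧
    fderiv ℝ (fun v : Fin n → ℝ => FFun A ct v) vt = 0 := by
  exact worst_case_stationary_point_general hA hvt hmin hmax
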